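/- Let i ≤ k be positive integers, A : 𝓢(ℝ^i) → 𝓢'(ℝ^i) continuous linear, ℓ : {1,…,i} → {1,…,k} injective, and let E : 𝓢(ℝ^k) → 𝓢'(ℝ^k) be the unique continuous linear map satisfying E(f₁⊗⋯⊗f_k)(g₁⊗⋯⊗g_k) = A(f_{ℓ(1)}⊗⋯⊗f_{ℓ(i)})(g_{ℓ(1)}⊗⋯⊗g_{ℓ(i)}) · ∏_{m ∉ range(ℓ)} ∫ f_m g_m for all f₁,…,f_k,g₁,…,g_k ∈ 𝓢(ℝ). If A is skew-adjoint (A* = −A), then E is skew-adjoint; if A is self-adjoint (A* = A), then E is self-adjoint. -/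

import Mathlib

/-!
On pure tensors, taking adjoints commutes with extension because `∫ g conj f` is the conjugate of
`∫ f conj g`. Both sides of the adjointness relation are separately continuous and sesquilinear, so
it suffices that the span of the pure tensors is dense in Schwartz space. A Schwartz function
vanishing outside a small cube equals its Fourier series times a tensor cutoff, whose terms are pure
tensors; the series converges in Schwartz space because the seminorms of the terms grow polynomially
in the frequency while the Fourier coefficients decay rapidly. Dilation extends this to all compact
supports, and cutting off at larger and larger scales reaches every Schwartz function.
-/

open MeasureTheory SchwartzMap

/-- Distribution-valued operators on `ℝ^n`: continuous linear maps `𝓢(ℝ^n) → 𝓢'(ℝ^n)`. -/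
abbrev DVO (n : ℕ) : Type :=
  SchwartzMap (Fin n → ℝ) ℂ →L[ℂ] (SchwartzMap (Fin n → ℝ) ℂ →L[ℂ] ℂ)

/-- `F ∈ 𝓢(ℝ^n)` is the pure tensor `f₁ ⊗ ⋯ ⊗ f_n` of the one-dimensional Schwartz functions
`f₁, …, f_n`. -/
def IsTensor {n : ℕ} (f : Fin n → SchwartzMap ℝ ℂ) (F : SchwartzMap (Fin n → ℝ) ℂ) : Prop :=
  ∀ x : Fin n → ℝ, F x = ∏ m, f m (x m)

/-- `fc` is the complex conjugate of the Schwartz function `f`. -/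
def IsConjOf {n : ℕ} (f fc : SchwartzMap (Fin n → ℝ) ℂ) : Prop :=
  ∀ x, fc x = (starRingEnd ℂ) (f x)

/-- `A : 𝓢(ℝ^n) → 𝓢'(ℝ^n)` is skew-adjoint (`A* = −A`), where the adjoint is characterized by
`(A* g)(conj f) = conj ((A f)(conj g))`; equivalently
`(A g)(conj f) = − conj ((A f)(conj g))` for all `f, g`. -/
def IsSkewAdjointDVO {n : ℕ} (A : DVO n) : Prop :=
  ∀ f g fc gc : SchwartzMap (Fin n → ℝ) ℂ, IsConjOf f fc → IsConjOf g gc →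
    A g fc = - (starRingEnd ℂ) (A f gc)

/-- `A : 𝓢(ℝ^n) → 𝓢'(ℝ^n)` is self-adjoint (`A* = A`): `(A g)(conj f) = conj ((A f)(conj g))`
for all `f, g`. -/
def IsSelfAdjointDVO {n : ℕ} (A : DVO n) : Prop :=
  ∀ f g fc gc : SchwartzMap (Fin n → ℝ) ℂ, IsConjOf f fc → IsConjOf g gc →
    A g fc = (starRingEnd ℂ) (A f gc)

/-- `E` is the `k`-particle extension `A_{(ℓ(1),…,ℓ(i))}` of the `i`-particle operator `A`. -/
def IsExtension (i k : ℕ) (A : DVO i) (ℓ : Fin i → Fin k) (E : DVO k) : Prop :=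
  ∀ (f g : Fin k → SchwartzMap ℝ ℂ)
    (F G : SchwartzMap (Fin k → ℝ) ℂ) (F' G' : SchwartzMap (Fin i → ℝ) ℂ),
    IsTensor f F → IsTensor g G →
    IsTensor (fun a => f (ℓ a)) F' → IsTensor (fun a => g (ℓ a)) G' →
    E F G = A F' G' * ∏ m ∈ Finset.univ \ Finset.image ℓ Finset.univ, ∫ x : ℝ, f m x * g m x

open Filter Topology FourierTransform
open scoped ContDiff

section Multiplication

variable {𝕜 E F : Type*} [RCLike 𝕜] [NormedAddCommGroup E] [NormedSpace ℝ E]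
  [NormedAddCommGroup F] [NormedSpace ℝ F] [NormedSpace 𝕜 F]

theorem seminorm_smulLeftCLM_le {g : E → 𝕜} (hg : g.HasTemperateGrowth) (f : 𝓢(E, F))
    (p l K : ℕ) {B : ℝ} (hB : ∀ j ≤ l, ∀ x, ‖iteratedFDeriv ℝ j g x‖ ≤ B * (1 + ‖x‖) ^ K) :
    SchwartzMap.seminorm 𝕜 p l (smulLeftCLM F g f) ≤ B * (2 ^ l * (2 ^ (p + K) *
      (Finset.Iic (p + K, l)).sup (fun m => SchwartzMap.seminorm 𝕜 m.1 m.2) f)) := by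
  set S := 2 ^ (p + K) * (Finset.Iic (p + K, l)).sup (fun m => SchwartzMap.seminorm 𝕜 m.1 m.2) f
  have hf (j : ℕ) (x : E) : (1 + ‖x‖) ^ (p + K) * ‖iteratedFDeriv ℝ (l - j) f x‖ ≤ S :=
    SchwartzMap.one_add_le_sup_seminorm_apply (m := (p + K, l)) le_rfl (Nat.sub_le l j) f x
  have hB₀ : 0 ≤ B := by
    simpa using (norm_nonneg _).trans (hB 0 (Nat.zero_le l) 0)
  have : 0 ≤ S := by positivity
  refine SchwartzMap.seminorm_le_bound 𝕜 p l _ (by positivity) fun x => ?_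
  rw [show ⇑(smulLeftCLM F g f) = fun y => g y • f y from
    funext (smulLeftCLM_apply_apply hg f)]
  calc ‖x‖ ^ p * ‖iteratedFDeriv ℝ l (fun y => g y • f y) x‖
      ≤ (1 + ‖x‖) ^ p * ∑ j ∈ Finset.range (l + 1), (l.choose j : ℝ) *
          ‖iteratedFDeriv ℝ j g x‖ * ‖iteratedFDeriv ℝ (l - j) f x‖ := by
        gcongr
        · linarith
        · exact norm_iteratedFDeriv_smul_le hg.1 (f.smooth ⊤) x (mod_cast le_top)
    _ ≤ (1 + ‖x‖) ^ p * ∑ j ∈ Finset.range (l + 1), (l.choose j : ℝ) *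
          (B * (1 + ‖x‖) ^ K) * ‖iteratedFDeriv ℝ (l - j) f x‖ := by
        gcongr with j hj
        exact hB j (Finset.mem_range_succ_iff.1 hj) x
    _ = ∑ j ∈ Finset.range (l + 1), (l.choose j : ℝ) *
          (B * ((1 + ‖x‖) ^ (p + K) * ‖iteratedFDeriv ℝ (l - j) f x‖)) := by
        rw [Finset.mul_sum]
        exact Finset.sum_congr rfl fun j _ => by ring
    _ ≤ ∑ j ∈ Finset.range (l + 1), (l.choose j : ℝ) * (B * S) := by
        gcongr with j
        exact hf j x
    _ = B * (2 ^ l * S) := by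
        rw [← Finset.sum_mul, ← Nat.cast_sum, Nat.sum_range_choose]
        push_cast
        ring

theorem norm_iteratedFDeriv_comp_clm_le {E₁ : Type*} [NormedAddCommGroup E₁] [NormedSpace ℝ E₁]
    {g : E → F} {l : ℕ} (hg : ContDiff ℝ l g) (L : E₁ →L[ℝ] E) (x : E₁) :
    ‖iteratedFDeriv ℝ l (g ∘ L) x‖ ≤ ‖iteratedFDeriv ℝ l g (L x)‖ * ‖L‖ ^ l := by
  rw [L.iteratedFDeriv_comp_right hg x le_rfl]
  simpa using ContinuousMultilinearMap.norm_compContinuousLinearMap_le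
    (iteratedFDeriv ℝ l g (L x)) fun _ => L

theorem norm_sub_apply_zero_le {g : E → F} (hg : Differentiable ℝ g) {C : ℝ} {K : ℕ}
    (hC : ∀ x, ‖fderiv ℝ g x‖ ≤ C * (1 + ‖x‖) ^ K) (x : E) :
    ‖g x - g 0‖ ≤ C * (1 + ‖x‖) ^ K * ‖x‖ := by
  have hC₀ : 0 ≤ C := by simpa using (norm_nonneg _).trans (hC 0)
  have hball (y : E) (hy : y ∈ Metric.closedBall 0 ‖x‖) :
      ‖fderiv ℝ g y‖ ≤ C * (1 + ‖x‖) ^ K := by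
    refine (hC y).trans ?_
    gcongr
    exact mem_closedBall_zero_iff.1 hy
  simpa using (convex_closedBall 0 ‖x‖).norm_image_sub_le_of_norm_fderiv_le
    (fun y _ => hg y) hball (Metric.mem_closedBall_self (norm_nonneg x))
    (mem_closedBall_zero_iff.2 (le_refl ‖x‖))

theorem exists_norm_iteratedFDeriv_comp_smul_sub_le {g : E → F} (hg : g.HasTemperateGrowth)
    (l : ℕ) : ∃ K : ℕ, ∃ C : ℝ, ∀ a : ℝ, |a| ≤ 1 → ∀ j ≤ l, ∀ x,
      ‖iteratedFDeriv ℝ j (fun y => g (a • y) - g 0) x‖ ≤ |a| * C * (1 + ‖x‖) ^ K := by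
  obtain ⟨K, C, hC₀, hC⟩ := hg.norm_iteratedFDeriv_le_uniform (l + 1)
  refine ⟨K + 1, C, fun a ha j hj x => ?_⟩
  have hax : ‖a • x‖ = |a| * ‖x‖ := norm_smul a x
  have hax_le : ‖a • x‖ ≤ ‖x‖ := hax ▸ mul_le_of_le_one_left (norm_nonneg x) ha
  rcases j.eq_zero_or_pos with rfl | hj₀
  · rw [norm_iteratedFDeriv_zero]
    calc ‖g (a • x) - g 0‖ ≤ C * (1 + ‖a • x‖) ^ K * ‖a • x‖ :=
          norm_sub_apply_zero_le (hg.1.differentiable (by simp))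
            (fun y => norm_iteratedFDeriv_one (𝕜 := ℝ) g ▸ hC 1 (Nat.le_add_left 1 l) y) _
      _ ≤ C * (1 + ‖x‖) ^ K * (|a| * (1 + ‖x‖)) := by
          nth_rw 2 [hax]
          gcongr
          linarith
      _ = |a| * C * (1 + ‖x‖) ^ (K + 1) := by ring
  · have hgj : ContDiff ℝ j g := hg.1.of_le (mod_cast le_top)
    have hderiv : iteratedFDeriv ℝ j (fun y => g (a • y) - g 0) x =
        a ^ j • iteratedFDeriv ℝ j g (a • x) := by
      have hga : ContDiff ℝ j fun y => g (a • y) := hgj.comp (contDiff_const_smul a)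
      rw [fun_iteratedFDeriv_sub_apply hga.contDiffAt contDiffAt_const,
        iteratedFDeriv_const_of_ne hj₀.ne', Pi.zero_apply, sub_zero,
        iteratedFDeriv_comp_const_smul a hgj]
    rw [hderiv, norm_smul, norm_pow, Real.norm_eq_abs, mul_assoc]
    gcongr
    · exact pow_le_of_le_one (abs_nonneg a) ha hj₀.ne'
    · calc ‖iteratedFDeriv ℝ j g (a • x)‖ ≤ C * (1 + ‖a • x‖) ^ K := hC j (by lia) _
        _ ≤ C * (1 + ‖x‖) ^ K := by gcongr
        _ ≤ C * (1 + ‖x‖) ^ (K + 1) := by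
          gcongr
          · linarith [norm_nonneg x]
          · exact K.le_succ

theorem tendsto_smulLeftCLM_comp_smul {g : E → 𝕜} (hg : g.HasTemperateGrowth) (hg₀ : g 0 = 1)
    (f : 𝓢(E, F)) :
    Tendsto (fun a : ℝ => smulLeftCLM F (fun x => g (a • x)) f) (𝓝 0) (𝓝 f) := by
  rw [(schwartz_withSeminorms 𝕜 E F).tendsto_nhds]
  rintro ⟨p, l⟩ ε hε
  obtain ⟨K, C, hC⟩ := exists_norm_iteratedFDeriv_comp_smul_sub_le hg l
  rw [hg₀] at hC
  set S := 2 ^ l * (2 ^ (p + K) *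
    (Finset.Iic (p + K, l)).sup (fun m => SchwartzMap.seminorm 𝕜 m.1 m.2) f)
  have hsmall : ∀ᶠ a : ℝ in 𝓝 0, |a| ≤ 1 :=
    (continuous_abs.tendsto' _ _ abs_zero).eventually_le_const one_pos
  have hlim : Tendsto (fun a : ℝ => |a| * C * S) (𝓝 0) (𝓝 0) :=
    Continuous.tendsto' (by fun_prop) _ _ (by simp)
  filter_upwards [hsmall, hlim.eventually_lt_const hε] with a ha haε
  have hga : (fun x => g (a • x)).HasTemperateGrowth :=
    hg.comp (a • ContinuousLinearMap.id ℝ E).hasTemperateGrowth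
  have hga₁ : (fun x => g (a • x) - 1).HasTemperateGrowth := hga.sub (.const 1)
  have hsub : smulLeftCLM F (fun x => g (a • x)) f - f =
      smulLeftCLM F (fun x => g (a • x) - 1) f := by
    ext x
    simp [smulLeftCLM_apply_apply hga, smulLeftCLM_apply_apply hga₁, sub_smul]
  rw [hsub]
  exact (seminorm_smulLeftCLM_le hga₁ f p l K (hC a ha)).trans_lt haε

end Multiplication

section Series

variable {ι 𝕜 E F : Type*} [RCLike 𝕜] [NormedAddCommGroup E] [NormedSpace ℝ E]
  [NormedAddCommGroup F] [NormedSpace ℝ F] [NormedSpace 𝕜 F] [CompleteSpace F]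
  {u : ι → 𝓢(E, F)} {f : 𝓢(E, F)}

theorem hasSum_iteratedFDeriv_of_summable_seminorm
    (hu : ∀ p l : ℕ, Summable fun j => SchwartzMap.seminorm 𝕜 p l (u j))
    (hf : ∀ x, HasSum (fun j => u j x) (f x)) (l : ℕ) (x : E) :
    HasSum (fun j => iteratedFDeriv ℝ l (u j) x) (iteratedFDeriv ℝ l f x) := by
  have hle (l : ℕ) (j : ι) (x : E) :
      ‖iteratedFDeriv ℝ l (u j) x‖ ≤ SchwartzMap.seminorm 𝕜 0 l (u j) :=
    SchwartzMap.norm_iteratedFDeriv_le_seminorm 𝕜 (u j) l x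
  rw [show ⇑f = fun y => ∑' j, u j y from funext fun y => (hf y).tsum_eq.symm,
    iteratedFDeriv_tsum_apply (N := (⊤ : ℕ∞)) (fun j => (u j).smooth ⊤) (fun l _ => hu 0 l)
      (fun l j x _ => hle l j x) le_top x]
  exact (Summable.of_norm_bounded (hu 0 l) (hle l · x)).hasSum

theorem seminorm_sum_sub_le_tsum_compl
    (hu : ∀ p l : ℕ, Summable fun j => SchwartzMap.seminorm 𝕜 p l (u j))
    (hf : ∀ x, HasSum (fun j => u j x) (f x)) (p l : ℕ) (s : Finset ι) :
    SchwartzMap.seminorm 𝕜 p l (∑ j ∈ s, u j - f) ≤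
      ∑' j : {j // j ∉ s}, SchwartzMap.seminorm 𝕜 p l (u j) := by
  refine SchwartzMap.seminorm_le_bound 𝕜 p l _ (tsum_nonneg fun _ => apply_nonneg _ _) fun x => ?_
  have hderiv := hasSum_iteratedFDeriv_of_summable_seminorm hu hf l x
  have htail : iteratedFDeriv ℝ l (⇑(∑ j ∈ s, u j - f)) x =
      -∑' j : {j // j ∉ s}, iteratedFDeriv ℝ l (u j) x := by
    rw [show ⇑(∑ j ∈ s, u j - f) = (fun y => ∑ j ∈ s, u j y) - ⇑f by ext; simp,
      iteratedFDeriv_sub_apply (ContDiff.sum fun j _ => (u j).smooth l).contDiffAt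
        (f.smooth l).contDiffAt, iteratedFDeriv_sum fun j _ => (u j).smooth l, ← hderiv.tsum_eq,
      ← hderiv.summable.sum_add_tsum_subtype_compl s, Finset.sum_apply]
    abel
  have hnorm : Summable fun j : {j // j ∉ s} => ‖iteratedFDeriv ℝ l (u j) x‖ :=
    ((hu 0 l).subtype _).of_nonneg_of_le (fun _ => norm_nonneg _)
      fun j => SchwartzMap.norm_iteratedFDeriv_le_seminorm 𝕜 (u j) l x
  calc ‖x‖ ^ p * ‖iteratedFDeriv ℝ l (⇑(∑ j ∈ s, u j - f)) x‖
      ≤ ‖x‖ ^ p * ∑' j : {j // j ∉ s}, ‖iteratedFDeriv ℝ l (u j) x‖ := by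
        rw [htail, norm_neg]
        gcongr
        exact norm_tsum_le_tsum_norm hnorm
    _ = ∑' j : {j // j ∉ s}, ‖x‖ ^ p * ‖iteratedFDeriv ℝ l (u j) x‖ := tsum_mul_left.symm
    _ ≤ ∑' j : {j // j ∉ s}, SchwartzMap.seminorm 𝕜 p l (u j) :=
        (hnorm.mul_left _).tsum_le_tsum (fun j => SchwartzMap.le_seminorm 𝕜 p l (u j) x)
          ((hu p l).subtype _)

theorem hasSum_of_summable_seminorm
    (hu : ∀ p l : ℕ, Summable fun j => SchwartzMap.seminorm 𝕜 p l (u j))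
    (hf : ∀ x, HasSum (fun j => u j x) (f x)) : HasSum u f := by
  rw [HasSum, SummationFilter.unconditional_filter, (schwartz_withSeminorms 𝕜 E F).tendsto_nhds]
  rintro ⟨p, l⟩ ε hε
  have htail := tendsto_tsum_compl_atTop_zero fun j => SchwartzMap.seminorm 𝕜 p l (u j)
  filter_upwards [htail.eventually_lt_const hε] with s hs
  exact (seminorm_sum_sub_le_tsum_compl hu hf p l s).trans_lt hs

end Series

section Tensor

variable {ι 𝕜 : Type*} [Fintype ι] [RCLike 𝕜]
  {E : ι → Type*} [∀ i, NormedAddCommGroup (E i)]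

theorem norm_pi_le_prod_one_add (x : ∀ i, E i) : ‖x‖ ≤ ∏ i, (1 + ‖x i‖) := by
  refine (pi_norm_le_iff_of_nonneg (by positivity)).2 fun i => ?_
  calc ‖x i‖ ≤ ∏ i, max ‖x i‖ 1 := Finset.le_prod_max_one (Finset.mem_univ i) fun i => ‖x i‖
    _ ≤ ∏ i, (1 + ‖x i‖) := by
      gcongr with i
      exact max_le (by linarith) (by linarith [norm_nonneg (x i)])

variable [∀ i, NormedSpace ℝ (E i)]

theorem contDiff_comp_eval {F : Type*} [NormedAddCommGroup F] [NormedSpace ℝ F] {i : ι}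
    {g : E i → F} {n : ℕ∞ω} (hg : ContDiff ℝ n g) : ContDiff ℝ n fun x : ∀ i, E i => g (x i) :=
  hg.comp (ContinuousLinearMap.proj (R := ℝ) (φ := E) i).contDiff

theorem norm_iteratedFDeriv_comp_eval_le {F : Type*} [NormedAddCommGroup F] [NormedSpace ℝ F]
    {i : ι} {g : E i → F} {l : ℕ} (hg : ContDiff ℝ l g) (x : ∀ i, E i) :
    ‖iteratedFDeriv ℝ l (fun y : ∀ i, E i => g (y i)) x‖ ≤ ‖iteratedFDeriv ℝ l g (x i)‖ := by
  have hproj : ‖ContinuousLinearMap.proj (R := ℝ) (φ := E) i‖ ≤ 1 :=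
    ContinuousLinearMap.opNorm_le_bound _ zero_le_one fun y => by simpa using norm_le_pi_norm y i
  exact (norm_iteratedFDeriv_comp_clm_le hg (.proj i) x).trans
    (mul_le_of_le_one_right (norm_nonneg _) (pow_le_one₀ (norm_nonneg _) hproj))

theorem exists_pow_mul_norm_iteratedFDeriv_prod_le (f : ∀ i, 𝓢(E i, 𝕜)) (p l : ℕ) :
    ∃ C : ℝ, ∀ x : ∀ i, E i,
      ‖x‖ ^ p * ‖iteratedFDeriv ℝ l (fun y : ∀ i, E i => ∏ i, f i (y i)) x‖ ≤ C := by
  classical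
  let S (j : ℕ) (i : ι) : ℝ :=
    2 ^ p * (Finset.Iic (p, j)).sup (fun m => SchwartzMap.seminorm ℝ m.1 m.2) (f i)
  have hS (j : ℕ) (i : ι) (x : ∀ i, E i) :
      (1 + ‖x i‖) ^ p * ‖iteratedFDeriv ℝ j (fun y : ∀ i, E i => f i (y i)) x‖ ≤ S j i := by
    grw [norm_iteratedFDeriv_comp_eval_le ((f i).smooth j) x]
    exact SchwartzMap.one_add_le_sup_seminorm_apply (m := (p, j)) le_rfl le_rfl (f i) (x i)
  refine ⟨∑ s ∈ (Finset.univ : Finset ι).sym l, (s : Multiset ι).countPerms *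
    ∏ i, S ((s : Multiset ι).count i) i, fun x => ?_⟩
  calc ‖x‖ ^ p * ‖iteratedFDeriv ℝ l (fun y : ∀ i, E i => ∏ i, f i (y i)) x‖
      ≤ (∏ i, (1 + ‖x i‖)) ^ p * ∑ s ∈ (Finset.univ : Finset ι).sym l,
          (s : Multiset ι).countPerms * ∏ i,
            ‖iteratedFDeriv ℝ ((s : Multiset ι).count i) (fun y : ∀ i, E i => f i (y i)) x‖ := by
        gcongr
        · exact norm_pi_le_prod_one_add x
        · exact norm_iteratedFDeriv_prod_le (N := ∞)
            (fun i _ => contDiff_comp_eval ((f i).smooth ⊤)) (mod_cast le_top)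
    _ = ∑ s ∈ (Finset.univ : Finset ι).sym l, (s : Multiset ι).countPerms * ∏ i, (1 + ‖x i‖) ^ p *
          ‖iteratedFDeriv ℝ ((s : Multiset ι).count i) (fun y : ∀ i, E i => f i (y i)) x‖ := by
        simp only [Finset.mul_sum, Finset.prod_mul_distrib, Finset.prod_pow]
        exact Finset.sum_congr rfl fun s _ => mul_left_comm _ _ _
    _ ≤ ∑ s ∈ (Finset.univ : Finset ι).sym l, (s : Multiset ι).countPerms *
          ∏ i, S ((s : Multiset ι).count i) i := by
        gcongr with s _ i
        exact hS _ i x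

/-- The tensor product `f₁ ⊗ ⋯ ⊗ f_n` of Schwartz functions, as a Schwartz function on the
product space. -/
noncomputable def schwartzTensor (f : ∀ i, 𝓢(E i, 𝕜)) : 𝓢(∀ i, E i, 𝕜) where
  toFun x := ∏ i, f i (x i)
  smooth' := contDiff_prod fun i _ => contDiff_comp_eval ((f i).smooth ⊤)
  decay' := exists_pow_mul_norm_iteratedFDeriv_prod_le f

theorem schwartzTensor_apply (f : ∀ i, 𝓢(E i, 𝕜)) (x : ∀ i, E i) :
    schwartzTensor f x = ∏ i, f i (x i) := rfl

end Tensor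

section Periodization

/-- The representative in `(-1/2, 1/2]` of a point of `ℝ / ℤ`, used to periodize functions. -/
noncomputable def centeredRep (t : UnitAddCircle) : ℝ :=
  AddCircle.equivIoc (1 : ℝ) (-1 / 2) t

theorem abs_centeredRep (t : UnitAddCircle) : |centeredRep t| = ‖t‖ := by
  have ht : centeredRep t ∈ Set.Ioc (-1 / 2 : ℝ) (-1 / 2 + 1) :=
    (AddCircle.equivIoc (1 : ℝ) (-1 / 2) t).2
  have hle : |centeredRep t| ≤ |(1 : ℝ)| / 2 := by
    rw [abs_one, abs_le]
    constructor <;> linarith [ht.1, ht.2]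
  rw [← Real.norm_eq_abs, Real.norm_eq_abs, ← (AddCircle.norm_coe_eq_abs_iff 1 one_ne_zero).2 hle]
  exact congrArg _ (AddCircle.coe_equivIoc)

theorem centeredRep_coe {x : ℝ} (hx : x ∈ Set.Ioc (-1 / 2 : ℝ) (-1 / 2 + 1)) :
    centeredRep x = x :=
  AddCircle.equivIoc_coe_of_mem hx

theorem continuousAt_centeredRep {t : UnitAddCircle} (ht : ‖t‖ < 1 / 2) :
    ContinuousAt centeredRep t := by
  refine continuous_subtype_val.continuousAt.comp (AddCircle.continuousAt_equivIoc 1 _ ?_)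
  rintro rfl
  rw [(AddCircle.norm_coe_eq_abs_iff 1 one_ne_zero).2 (by norm_num [abs_div])] at ht
  norm_num [abs_div] at ht

variable {ι : Type*} [Fintype ι] {F : (ι → ℝ) → ℂ}

/-- The `ℤ^ι`-periodic function that agrees with `F` on the cube `(-1/2, 1/2]^ι`. The vanishing of
`F` near the boundary of the cube makes it continuous. -/
noncomputable def periodization (F : (ι → ℝ) → ℂ) (hFc : Continuous F)
    (hF : ∀ x, 1 / 4 < ‖x‖ → F x = 0) : C(UnitAddTorus ι, ℂ) where
  toFun t := F fun i => centeredRep (t i)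
  continuous_toFun := by
    rw [continuous_iff_continuousAt]
    intro t
    rcases lt_or_ge ‖t‖ (1 / 2) with ht | ht
    · refine hFc.continuousAt.comp (continuousAt_pi.2 fun i => ?_)
      exact (continuousAt_centeredRep ((norm_le_pi_norm t i).trans_lt ht)).comp
        (f := fun t : UnitAddTorus ι => t i) (x := t) (continuous_apply i).continuousAt
    · have hev : ∀ᶠ s in 𝓝 t, 1 / 4 < ‖s‖ :=
        continuous_norm.continuousAt.eventually_const_lt (by linarith)
      refine continuousAt_const.congr (hev.mono fun s hs => (hF _ ?_).symm)
      have hnorm : ‖fun i => centeredRep (s i)‖ = ‖s‖ := by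
        simp only [Pi.norm_def, nnnorm, Real.norm_eq_abs, abs_centeredRep]
      rwa [hnorm]

theorem periodization_coe {hFc : Continuous F} {hF : ∀ x, 1 / 4 < ‖x‖ → F x = 0} {x : ι → ℝ}
    (hx : ∀ i, x i ∈ Set.Ioc (-1 / 2 : ℝ) (-1 / 2 + 1)) :
    periodization F hFc hF (fun i => (x i : UnitAddCircle)) = F x :=
  congrArg F (funext fun i => centeredRep_coe (hx i))

theorem mem_Ioc_of_norm_lt {x : ι → ℝ} (hx : ‖x‖ < 1 / 2) (i : ι) :
    x i ∈ Set.Ioc (-1 / 2 : ℝ) (-1 / 2 + 1) := by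
  have := abs_lt.1 ((norm_le_pi_norm x i).trans_lt hx)
  constructor <;> linarith

theorem mFourierCoeff_periodization (hFc : Continuous F) (hF : ∀ x, 1 / 4 < ‖x‖ → F x = 0)
    (n : ι → ℤ) : UnitAddTorus.mFourierCoeff (periodization F hFc hF) n =
      ∫ x : ι → ℝ, UnitAddTorus.mFourier (-n) (fun i => (x i : UnitAddCircle)) * F x := by
  have hcompl (x : ι → ℝ) (hx : x ∉ {x : ι → ℝ | ∀ i, x i ∈ Set.Ioc (-1 / 2 : ℝ) (-1 / 2 + 1)}) :
      UnitAddTorus.mFourier (-n) (fun i => (x i : UnitAddCircle)) * F x = 0 := by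
    rw [hF x, mul_zero]
    by_contra! hle
    exact hx (mem_Ioc_of_norm_lt (by linarith))
  have hmeas : MeasurableSet {x : ι → ℝ | ∀ i, x i ∈ Set.Ioc (-1 / 2 : ℝ) (-1 / 2 + 1)} :=
    MeasurableSet.univ_pi' fun _ => measurableSet_Ioc
  rw [UnitAddTorus.mFourierCoeff_eq_integral _ _ fun _ => -1 / 2,
    ← setIntegral_eq_integral_of_forall_compl_eq_zero hcompl]
  refine setIntegral_congr_fun hmeas fun x hx => ?_
  rw [periodization_coe hx, smul_eq_mul]

/-- The linear form `x ↦ 2π n·x`; the character of `ℝ^ι / ℤ^ι` of frequency `n` is the exponential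
of `i` times it. -/
noncomputable def fourierPhase (n : ι → ℤ) : (ι → ℝ) →L[ℝ] ℝ :=
  ∑ i, (2 * Real.pi * n i) • ContinuousLinearMap.proj i

theorem fourierPhase_apply (n : ι → ℤ) (x : ι → ℝ) :
    fourierPhase n x = ∑ i, 2 * Real.pi * n i * x i := by
  simp [fourierPhase]

theorem norm_fourierPhase_le (n : ι → ℤ) :
    ‖fourierPhase n‖ ≤ 2 * Real.pi * Fintype.card ι * ‖n‖ := by
  refine ContinuousLinearMap.opNorm_le_bound _ (by positivity) fun x => ?_
  rw [fourierPhase_apply]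
  calc ‖∑ i, 2 * Real.pi * n i * x i‖ ≤ ∑ i, ‖2 * Real.pi * n i * x i‖ := norm_sum_le _ _
    _ ≤ ∑ _i : ι, 2 * Real.pi * ‖n‖ * ‖x‖ := by
      gcongr with i
      rw [norm_mul, norm_mul, Real.norm_of_nonneg Real.two_pi_pos.le, Int.norm_cast_real]
      gcongr
      · exact norm_le_pi_norm n i
      · exact norm_le_pi_norm x i
    _ = 2 * Real.pi * Fintype.card ι * ‖n‖ * ‖x‖ := by
      rw [Finset.sum_const, Finset.card_univ, nsmul_eq_mul]
      ring

theorem mFourier_coe (n : ι → ℤ) (x : ι → ℝ) :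
    UnitAddTorus.mFourier n (fun i => (x i : UnitAddCircle)) =
      Complex.exp (fourierPhase n x * Complex.I) := by
  rw [fourierPhase_apply, Complex.ofReal_sum, Finset.sum_mul, Complex.exp_sum]
  refine Finset.prod_congr rfl fun i _ => ?_
  rw [fourier_coe_apply]
  congr 1
  push_cast
  ring

theorem fourier_toLp_intCast (F : 𝓢(ι → ℝ, ℂ)) (n : ι → ℤ) :
    𝓕 (compCLMOfContinuousLinearEquiv ℂ (EuclideanSpace.equiv ι ℝ) F)
      (WithLp.toLp 2 fun i => (n i : ℝ)) =
      ∫ x : ι → ℝ, UnitAddTorus.mFourier (-n) (fun i => (x i : UnitAddCircle)) * F x := by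
  rw [SchwartzMap.fourier_coe, Real.fourier_eq', ← (PiLp.volume_preserving_toLp ι).integral_comp
    (MeasurableEquiv.toLp 2 _).measurableEmbedding]
  refine integral_congr_ae (.of_forall fun x => ?_)
  have hphase : fourierPhase (-n) x = -2 * Real.pi * inner ℝ (WithLp.toLp 2 x)
      (WithLp.toLp 2 fun i => (n i : ℝ)) := by
    rw [fourierPhase_apply, EuclideanSpace.inner_toLp_toLp, dotProduct, Finset.mul_sum]
    refine Finset.sum_congr rfl fun i _ => ?_
    simp only [Pi.neg_apply, Int.cast_neg, star_trivial]
    ring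
  dsimp only
  rw [mFourier_coe, hphase]
  rfl

theorem norm_intCast_pi (n : ι → ℤ) : ‖fun i => (n i : ℝ)‖ = ‖n‖ := by
  simp only [Pi.norm_def, nnnorm, Int.norm_cast_real]

theorem summable_one_add_norm_pow_inv : ∃ N : ℕ, Summable fun n : ι → ℤ => ((1 + ‖n‖) ^ N)⁻¹ := by
  classical
  let b := (Pi.basisFun ℝ ι).restrictScalars ℤ
  have hb (n : ι → ℤ) : ‖b.equivFun.symm n‖ = ‖n‖ := by
    have hcoord : (b.equivFun.symm n : ι → ℝ) = fun i => (n i : ℝ) := by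
      ext i
      simp [b, Module.Basis.equivFun_symm_apply, Pi.single_apply]
    rw [Submodule.coe_norm, hcoord, norm_intCast_pi]
  let L := Submodule.span ℤ (Set.range (Pi.basisFun ℝ ι))
  have hN := (ZLattice.summable_norm_pow_inv L _ (Nat.lt_succ_self _)).comp_injective
    b.equivFun.symm.injective
  refine ⟨Module.finrank ℤ L + 1, .of_norm_bounded_eventually hN ?_⟩
  filter_upwards [(Set.finite_singleton (0 : ι → ℤ)).compl_mem_cofinite] with n hn
  have : 0 < ‖n‖ := norm_pos_iff.2 hn
  rw [Function.comp_apply, hb, Real.norm_of_nonneg (by positivity), inv_pow]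
  gcongr
  exact le_add_of_nonneg_left zero_le_one

theorem summable_one_add_norm_pow_mul_norm_intCast {E : Type*} [NormedAddCommGroup E]
    [NormedSpace ℝ E] (G : 𝓢(ι → ℝ, E)) (N : ℕ) :
    Summable fun n : ι → ℤ => (1 + ‖n‖) ^ N * ‖G fun i => (n i : ℝ)‖ := by
  obtain ⟨M, hM⟩ := summable_one_add_norm_pow_inv (ι := ι)
  set S := 2 ^ (N + M) *
    (Finset.Iic (N + M, 0)).sup (fun m => SchwartzMap.seminorm ℝ m.1 m.2) G
  refine (hM.mul_left S).of_nonneg_of_le (fun n => by positivity) fun n => ?_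
  have hS : (1 + ‖n‖) ^ (N + M) * ‖G fun i => (n i : ℝ)‖ ≤ S := by
    simpa only [norm_intCast_pi, norm_iteratedFDeriv_zero] using
      SchwartzMap.one_add_le_sup_seminorm_apply (𝕜 := ℝ) (m := (N + M, 0)) le_rfl le_rfl G
        fun i => (n i : ℝ)
  rw [← div_eq_mul_inv, le_div_iff₀ (by positivity)]
  exact (by ring : _ = _).trans_le hS

theorem summable_one_add_norm_pow_mul_norm_mFourierCoeff (F : 𝓢(ι → ℝ, ℂ))
    (hF : ∀ x, 1 / 4 < ‖x‖ → F x = 0) (N : ℕ) : Summable fun n : ι → ℤ => (1 + ‖n‖) ^ N *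
      ‖UnitAddTorus.mFourierCoeff (periodization F F.continuous hF) n‖ := by
  simp only [mFourierCoeff_periodization, ← fourier_toLp_intCast]
  exact summable_one_add_norm_pow_mul_norm_intCast
    (compCLMOfContinuousLinearEquiv ℂ (EuclideanSpace.equiv ι ℝ).symm
      (𝓕 (compCLMOfContinuousLinearEquiv ℂ (EuclideanSpace.equiv ι ℝ) F))) N

theorem hasSum_mFourierCoeff_mul_cexp (F : 𝓢(ι → ℝ, ℂ)) (hF : ∀ x, 1 / 4 < ‖x‖ → F x = 0)
    {x : ι → ℝ} (hx : ‖x‖ < 1 / 2) :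
    HasSum (fun n => UnitAddTorus.mFourierCoeff (periodization F F.continuous hF) n *
      Complex.exp (fourierPhase n x * Complex.I)) (F x) := by
  have hsum : Summable (UnitAddTorus.mFourierCoeff (periodization F F.continuous hF)) :=
    .of_norm (by simpa using summable_one_add_norm_pow_mul_norm_mFourierCoeff F hF 0)
  simpa only [mFourier_coe, smul_eq_mul, periodization_coe (mem_Ioc_of_norm_lt hx)] using
    UnitAddTorus.hasSum_mFourier_series_apply_of_summable hsum fun i => (x i : UnitAddCircle)

end Periodization

section Character

variable {E : Type*} [NormedAddCommGroup E] [NormedSpace ℝ E]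

theorem contDiff_cexp_ofReal_mul_I : ContDiff ℝ ∞ fun t : ℝ => Complex.exp (t * Complex.I) :=
  (Complex.ofRealCLM.contDiff.mul contDiff_const).cexp

theorem norm_iteratedDeriv_cexp_ofReal_mul_I (j : ℕ) (t : ℝ) :
    ‖iteratedDeriv j (fun t : ℝ => Complex.exp (t * Complex.I)) t‖ = 1 := by
  have hderiv : iteratedDeriv j (fun t : ℝ => Complex.exp (t * Complex.I)) =
      fun t : ℝ => Complex.I ^ j * Complex.exp (t * Complex.I) := by
    induction j with
    | zero => simp
    | succ j ih =>
      ext t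
      have hexp : HasDerivAt (fun t : ℝ => Complex.exp (t * Complex.I))
          (Complex.exp (t * Complex.I) * (1 * Complex.I)) t :=
        (Complex.ofRealCLM.hasDerivAt.mul_const Complex.I).cexp
      rw [iteratedDeriv_succ, ih, (hexp.const_mul _).deriv]
      ring
  rw [hderiv, norm_mul, norm_pow, Complex.norm_I, one_pow, one_mul, Complex.norm_exp_ofReal_mul_I]

theorem norm_iteratedFDeriv_cexp_clm_le (L : E →L[ℝ] ℝ) (j : ℕ) (x : E) :
    ‖iteratedFDeriv ℝ j (fun y => Complex.exp (L y * Complex.I)) x‖ ≤ ‖L‖ ^ j := by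
  have hj : ContDiff ℝ j fun t : ℝ => Complex.exp (t * Complex.I) :=
    contDiff_cexp_ofReal_mul_I.of_le (mod_cast le_top)
  have hcomp := norm_iteratedFDeriv_comp_clm_le hj L x
  rwa [norm_iteratedFDeriv_eq_norm_iteratedDeriv, norm_iteratedDeriv_cexp_ofReal_mul_I,
    one_mul] at hcomp

theorem hasTemperateGrowth_cexp_clm (L : E →L[ℝ] ℝ) :
    (fun x => Complex.exp (L x * Complex.I)).HasTemperateGrowth :=
  ⟨contDiff_cexp_ofReal_mul_I.comp L.contDiff, fun j => ⟨0, ‖L‖ ^ j, fun x => by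
    simpa using norm_iteratedFDeriv_cexp_clm_le L j x⟩⟩

end Character

section FourierSeries

variable {ι : Type*} [Fintype ι]

theorem exists_seminorm_smulLeftCLM_character_le (X : 𝓢(ι → ℝ, ℂ)) (p l : ℕ) :
    ∃ C : ℝ, ∀ n : ι → ℤ, SchwartzMap.seminorm ℂ p l
      (smulLeftCLM ℂ (fun x => Complex.exp (fourierPhase n x * Complex.I)) X) ≤
        C * (1 + ‖n‖) ^ l := by
  set S := 2 ^ l * (2 ^ (p + 0) *
    (Finset.Iic (p + 0, l)).sup (fun m => SchwartzMap.seminorm ℂ m.1 m.2) X)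
  set c : ℝ := 1 + 2 * Real.pi * Fintype.card ι
  refine ⟨c ^ l * S, fun n => ?_⟩
  have hphase : 1 + ‖fourierPhase n‖ ≤ c * (1 + ‖n‖) := by
    have := norm_fourierPhase_le n
    have : 0 ≤ 2 * Real.pi * Fintype.card ι := by positivity
    dsimp only [c]
    linarith [norm_nonneg n]
  have hderiv (j : ℕ) (hj : j ≤ l) (x : ι → ℝ) :
      ‖iteratedFDeriv ℝ j (fun y => Complex.exp (fourierPhase n y * Complex.I)) x‖ ≤
        (c * (1 + ‖n‖)) ^ l * (1 + ‖x‖) ^ 0 := by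
    calc ‖iteratedFDeriv ℝ j (fun y => Complex.exp (fourierPhase n y * Complex.I)) x‖
        ≤ ‖fourierPhase n‖ ^ j := norm_iteratedFDeriv_cexp_clm_le _ j x
      _ ≤ (1 + ‖fourierPhase n‖) ^ j := by
        gcongr
        exact le_add_of_nonneg_left zero_le_one
      _ ≤ (1 + ‖fourierPhase n‖) ^ l :=
        pow_le_pow_right₀ (le_add_of_nonneg_right (norm_nonneg _)) hj
      _ ≤ (c * (1 + ‖n‖)) ^ l * (1 + ‖x‖) ^ 0 := by
        rw [pow_zero, mul_one]
        gcongr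
  calc SchwartzMap.seminorm ℂ p l
        (smulLeftCLM ℂ (fun x => Complex.exp (fourierPhase n x * Complex.I)) X)
      ≤ (c * (1 + ‖n‖)) ^ l * S :=
        seminorm_smulLeftCLM_le (hasTemperateGrowth_cexp_clm _) X p l 0 hderiv
    _ = c ^ l * S * (1 + ‖n‖) ^ l := by rw [mul_pow, mul_right_comm]

theorem hasSum_mFourierCoeff_smul_smulLeftCLM (F : 𝓢(ι → ℝ, ℂ))
    (hF : ∀ x, 1 / 4 < ‖x‖ → F x = 0) {X : 𝓢(ι → ℝ, ℂ)} (hX₁ : ∀ x, ‖x‖ ≤ 1 / 4 → X x = 1)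
    (hX₀ : ∀ x, 1 / 2 ≤ ‖x‖ → X x = 0) :
    HasSum (fun n => UnitAddTorus.mFourierCoeff (periodization F F.continuous hF) n •
      smulLeftCLM ℂ (fun x => Complex.exp (fourierPhase n x * Complex.I)) X) F := by
  refine hasSum_of_summable_seminorm (𝕜 := ℂ) (fun p l => ?_) fun x => ?_
  · obtain ⟨C, hC⟩ := exists_seminorm_smulLeftCLM_character_le X p l
    refine ((summable_one_add_norm_pow_mul_norm_mFourierCoeff F hF l).mul_left C).of_nonneg_of_le
      (fun n => apply_nonneg _ _) fun n => ?_
    rw [map_smul_eq_mul, mul_comm, ← mul_assoc]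
    gcongr
    exact hC n
  · simp only [smul_apply, smulLeftCLM_apply_apply (hasTemperateGrowth_cexp_clm _), smul_eq_mul,
      ← mul_assoc]
    have hFX : F x * X x = F x := by
      rcases le_or_gt ‖x‖ (1 / 4) with hx | hx
      · rw [hX₁ x hx, mul_one]
      · rw [hF x hx, zero_mul]
    rcases lt_or_ge ‖x‖ (1 / 2) with hx | hx
    · simpa only [hFX] using (hasSum_mFourierCoeff_mul_cexp F hF hx).mul_right (X x)
    · simpa only [hX₀ x hx, mul_zero, hF x (by linarith)] using hasSum_zero

theorem smulLeftCLM_character_schwartzTensor (n : ι → ℤ) (f : ι → 𝓢(ℝ, ℂ)) :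
    smulLeftCLM ℂ (fun x => Complex.exp (fourierPhase n x * Complex.I)) (schwartzTensor f) =
      schwartzTensor fun i => smulLeftCLM ℂ (fun t => Complex.exp
        (((2 * Real.pi * n i) • ContinuousLinearMap.id ℝ ℝ : ℝ →L[ℝ] ℝ) t * Complex.I)) (f i) := by
  ext x
  rw [smulLeftCLM_apply_apply (hasTemperateGrowth_cexp_clm _), fourierPhase_apply,
    Complex.ofReal_sum, Finset.sum_mul, Complex.exp_sum]
  simp only [schwartzTensor_apply, smulLeftCLM_apply_apply (hasTemperateGrowth_cexp_clm _),
    smul_eq_mul, Finset.prod_mul_distrib]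
  rfl

end FourierSeries

section Density

variable {ι : Type*} [Fintype ι]

/-- A smooth bump function on `ℝ`, as a complex-valued Schwartz function; its tensor powers are the
cutoffs on `ℝ^ι`. -/
noncomputable def schwartzBump (χ : ContDiffBump (0 : ℝ)) : 𝓢(ℝ, ℂ) :=
  (χ.hasCompactSupport.comp_left Complex.ofReal_zero).toSchwartzMap
    (Complex.ofRealCLM.contDiff.comp χ.contDiff)

theorem schwartzBump_apply (χ : ContDiffBump (0 : ℝ)) (t : ℝ) : schwartzBump χ t = χ t := rfl

theorem schwartzTensor_bump_eq_one {χ : ContDiffBump (0 : ℝ)} {x : ι → ℝ} (hx : ‖x‖ ≤ χ.rIn) :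
    schwartzTensor (fun _ => schwartzBump χ) x = 1 :=
  Finset.prod_eq_one fun i _ => by
    rw [schwartzBump_apply, χ.one_of_mem_closedBall, Complex.ofReal_one]
    exact mem_closedBall_zero_iff.2 ((norm_le_pi_norm x i).trans hx)

theorem schwartzTensor_bump_eq_zero {χ : ContDiffBump (0 : ℝ)} {x : ι → ℝ} (hx : χ.rOut ≤ ‖x‖) :
    schwartzTensor (fun _ => schwartzBump χ) x = 0 := by
  obtain ⟨i, hi⟩ : ∃ i, χ.rOut ≤ ‖x i‖ := by
    by_contra! hlt
    exact hx.not_gt ((pi_norm_lt_iff χ.rOut_pos).2 hlt)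
  rw [schwartzTensor_apply]
  refine Finset.prod_eq_zero (Finset.mem_univ i) ?_
  rw [schwartzBump_apply, χ.zero_of_le_dist (by simpa using hi), Complex.ofReal_zero]

/-- The closure in `𝓢(ℝ^ι)` of the linear span of the pure tensors; the density of pure tensors is
the statement that it is everything. -/
noncomputable def tensorClosure (ι : Type*) [Fintype ι] : Submodule ℂ 𝓢(ι → ℝ, ℂ) :=
  (Submodule.span ℂ (Set.range fun f : ι → 𝓢(ℝ, ℂ) => schwartzTensor f)).topologicalClosure

theorem schwartzTensor_mem_tensorClosure (f : ι → 𝓢(ℝ, ℂ)) :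
    schwartzTensor f ∈ tensorClosure ι :=
  Submodule.le_topologicalClosure _ (Submodule.subset_span ⟨f, rfl⟩)

theorem isClosed_tensorClosure : IsClosed (tensorClosure ι : Set 𝓢(ι → ℝ, ℂ)) :=
  Submodule.isClosed_topologicalClosure _

theorem mem_tensorClosure_of_forall_eq_zero {F : 𝓢(ι → ℝ, ℂ)}
    (hF : ∀ x, 1 / 4 < ‖x‖ → F x = 0) : F ∈ tensorClosure ι := by
  let χ : ContDiffBump (0 : ℝ) := ⟨1 / 4, 1 / 2, by norm_num, by norm_num⟩
  refine isClosed_tensorClosure.mem_of_tendsto (hasSum_mFourierCoeff_smul_smulLeftCLM F hF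
    (X := schwartzTensor fun _ => schwartzBump χ)
    (fun x hx => schwartzTensor_bump_eq_one (χ := χ) hx)
    fun x hx => schwartzTensor_bump_eq_zero (χ := χ) hx) (.of_forall fun s => ?_)
  refine Submodule.sum_mem _ fun n _ => Submodule.smul_mem _ _ ?_
  rw [smulLeftCLM_character_schwartzTensor]
  exact schwartzTensor_mem_tensorClosure _

/-- The dilation `f ↦ f (a • ·)` of Schwartz space, which brings compact supports into the unit
cube. -/
noncomputable def schwartzDilation (E : Type*) [NormedAddCommGroup E] [NormedSpace ℝ E] (a : ℝˣ) :
    𝓢(E, ℂ) →L[ℂ] 𝓢(E, ℂ) :=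
  compCLMOfContinuousLinearEquiv ℂ (ContinuousLinearEquiv.smulLeft a)

theorem schwartzDilation_apply {E : Type*} [NormedAddCommGroup E] [NormedSpace ℝ E] (a : ℝˣ)
    (f : 𝓢(E, ℂ)) (x : E) : schwartzDilation E a f x = f ((a : ℝ) • x) := rfl

theorem schwartzDilation_mem_tensorClosure (a : ℝˣ) {f : 𝓢(ι → ℝ, ℂ)}
    (hf : f ∈ tensorClosure ι) : schwartzDilation (ι → ℝ) a f ∈ tensorClosure ι := by
  have hle : tensorClosure ι ≤
      (tensorClosure ι).comap (schwartzDilation (ι → ℝ) a : 𝓢(ι → ℝ, ℂ) →ₗ[ℂ] 𝓢(ι → ℝ, ℂ)) := by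
    refine Submodule.topologicalClosure_minimal _ (Submodule.span_le.2 ?_)
      (isClosed_tensorClosure.preimage (schwartzDilation _ a).continuous)
    rintro _ ⟨f, rfl⟩
    exact schwartzTensor_mem_tensorClosure fun i => schwartzDilation ℝ a (f i)
  exact hle hf

theorem smulLeftCLM_comp_smul_mem_tensorClosure {X : 𝓢(ι → ℝ, ℂ)}
    (hX : ∀ x, 1 / 4 < ‖x‖ → X x = 0) (f : 𝓢(ι → ℝ, ℂ)) (a : ℝˣ) :
    smulLeftCLM ℂ (fun x => X ((a : ℝ) • x)) f ∈ tensorClosure ι := by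
  have hXa : (fun x => X ((a : ℝ) • x)).HasTemperateGrowth :=
    (schwartzDilation _ a X).hasTemperateGrowth
  have hmem : smulLeftCLM ℂ X (schwartzDilation _ a⁻¹ f) ∈ tensorClosure ι :=
    mem_tensorClosure_of_forall_eq_zero fun x hx => by
      rw [smulLeftCLM_apply_apply X.hasTemperateGrowth, hX x hx, zero_smul]
  convert schwartzDilation_mem_tensorClosure a hmem using 1
  ext x
  rw [schwartzDilation_apply, smulLeftCLM_apply_apply hXa,
    smulLeftCLM_apply_apply X.hasTemperateGrowth, schwartzDilation_apply]
  simp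

theorem tensorClosure_eq_top : tensorClosure ι = ⊤ := by
  rw [eq_top_iff]
  rintro f -
  let χ : ContDiffBump (0 : ℝ) := ⟨1 / 8, 1 / 4, by norm_num, by norm_num⟩
  let X : 𝓢(ι → ℝ, ℂ) := schwartzTensor fun _ => schwartzBump χ
  have hX₀ : X 0 = 1 := schwartzTensor_bump_eq_one (χ := χ) (by simpa using χ.rIn_pos.le)
  have hX (x : ι → ℝ) (hx : 1 / 4 < ‖x‖) : X x = 0 := schwartzTensor_bump_eq_zero (χ := χ) hx.le
  refine isClosed_tensorClosure.mem_of_tendsto ((tendsto_smulLeftCLM_comp_smul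
    X.hasTemperateGrowth hX₀ f).mono_left (nhdsWithin_le_nhds (s := {0}ᶜ))) ?_
  filter_upwards [self_mem_nhdsWithin] with a ha
  exact smulLeftCLM_comp_smul_mem_tensorClosure hX f (Units.mk0 a ha)

theorem dense_span_range_schwartzTensor :
    Dense (Submodule.span ℂ (Set.range (schwartzTensor : (ι → 𝓢(ℝ, ℂ)) → 𝓢(ι → ℝ, ℂ))) :
      Set 𝓢(ι → ℝ, ℂ)) :=
  Submodule.dense_iff_topologicalClosure_eq_top.2 tensorClosure_eq_top

end Density

section Adjoint

/-- Pointwise complex conjugation, as a conjugate-linear map of Schwartz space. -/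
noncomputable def schwartzConj (E : Type*) [NormedAddCommGroup E] [NormedSpace ℝ E] :
    𝓢(E, ℂ) →L⋆[ℂ] 𝓢(E, ℂ) where
  __ := SchwartzMap.postcompCLM (E := E) (Complex.conjCLE : ℂ →L[ℝ] ℂ)
  map_smul' c f := by
    ext x
    exact map_mul (starRingEnd ℂ) c (f x)

theorem schwartzConj_apply {E : Type*} [NormedAddCommGroup E] [NormedSpace ℝ E] (f : 𝓢(E, ℂ))
    (x : E) : schwartzConj E f x = starRingEnd ℂ (f x) := rfl

theorem schwartzConj_schwartzTensor {ι : Type*} [Fintype ι] (f : ι → 𝓢(ℝ, ℂ)) :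
    schwartzConj (ι → ℝ) (schwartzTensor f) = schwartzTensor fun i => schwartzConj ℝ (f i) := by
  ext x
  exact map_prod (starRingEnd ℂ) (fun i => f i (x i)) Finset.univ

theorem integral_mul_schwartzConj {E : Type*} [NormedAddCommGroup E] [NormedSpace ℝ E]
    [MeasurableSpace E] {μ : MeasureTheory.Measure E} (f g : 𝓢(E, ℂ)) :
    ∫ x, g x * schwartzConj E f x ∂μ = starRingEnd ℂ (∫ x, f x * schwartzConj E g x ∂μ) := by
  rw [← integral_conj]
  simp only [schwartzConj_apply, map_mul, Complex.conj_conj, mul_comm]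

theorem isConjOf_iff {n : ℕ} {f fc : 𝓢(Fin n → ℝ, ℂ)} :
    IsConjOf f fc ↔ fc = schwartzConj _ f :=
  ⟨fun h => SchwartzMap.ext h, fun h => DFunLike.congr_fun h⟩

/-- `B` is the adjoint `A*` of `A`. Self-adjointness and skew-adjointness are the cases `B = A` and
`B = -A`. -/
def IsAdjointDVO {n : ℕ} (A B : DVO n) : Prop :=
  ∀ f g, B g (schwartzConj _ f) = starRingEnd ℂ (A f (schwartzConj _ g))

theorem isSkewAdjointDVO_iff {n : ℕ} {A : DVO n} : IsSkewAdjointDVO A ↔ IsAdjointDVO A (-A) := by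
  simp only [IsSkewAdjointDVO, IsAdjointDVO, isConjOf_iff, neg_apply, neg_eq_iff_eq_neg]
  exact ⟨fun h f g => h f g _ _ rfl rfl, fun h f g _ _ hf hg => hf ▸ hg ▸ h f g⟩

theorem isSelfAdjointDVO_iff {n : ℕ} {A : DVO n} : IsSelfAdjointDVO A ↔ IsAdjointDVO A A := by
  simp only [IsSelfAdjointDVO, IsAdjointDVO, isConjOf_iff]
  exact ⟨fun h f g => h f g _ _ rfl rfl, fun h f g _ _ hf hg => hf ▸ hg ▸ h f g⟩

variable {i k : ℕ} {A B : DVO i} {ℓ : Fin i → Fin k} {E E' : DVO k}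

theorem IsExtension.neg (hE : IsExtension i k A ℓ E) : IsExtension i k (-A) ℓ (-E) := by
  intro f g F G F' G' hF hG hF' hG'
  simp only [neg_apply, hE f g F G F' G' hF hG hF' hG', neg_mul]

theorem IsExtension.apply_schwartzTensor (hE : IsExtension i k A ℓ E) (f g : Fin k → 𝓢(ℝ, ℂ)) :
    E (schwartzTensor f) (schwartzTensor g) =
      A (schwartzTensor (f ∘ ℓ)) (schwartzTensor (g ∘ ℓ)) *
        ∏ m ∈ Finset.univ \ Finset.image ℓ Finset.univ, ∫ x : ℝ, f m x * g m x :=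
  hE f g _ _ _ _ (fun _ => rfl) (fun _ => rfl) (fun _ => rfl) fun _ => rfl

theorem IsExtension.adjoint_schwartzTensor (hE : IsExtension i k A ℓ E)
    (hE' : IsExtension i k B ℓ E') (hAB : IsAdjointDVO A B) (f g : Fin k → 𝓢(ℝ, ℂ)) :
    E' (schwartzTensor g) (schwartzConj _ (schwartzTensor f)) =
      starRingEnd ℂ (E (schwartzTensor f) (schwartzConj _ (schwartzTensor g))) := by
  have hcomp (h : Fin k → 𝓢(ℝ, ℂ)) : schwartzTensor ((fun m => schwartzConj ℝ (h m)) ∘ ℓ) =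
      schwartzConj _ (schwartzTensor (h ∘ ℓ)) := (schwartzConj_schwartzTensor _).symm
  rw [schwartzConj_schwartzTensor, schwartzConj_schwartzTensor, hE.apply_schwartzTensor,
    hE'.apply_schwartzTensor, hcomp, hcomp, hAB, map_mul, map_prod]
  exact congrArg _ (Finset.prod_congr rfl fun m _ => integral_mul_schwartzConj (f m) (g m))

theorem isAdjointDVO_of_schwartzTensor {n : ℕ} {A B : DVO n}
    (h : ∀ f g : Fin n → 𝓢(ℝ, ℂ), B (schwartzTensor g) (schwartzConj _ (schwartzTensor f)) =
      starRingEnd ℂ (A (schwartzTensor f) (schwartzConj _ (schwartzTensor g)))) :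
    IsAdjointDVO A B := by
  let applyAt (T : DVO n) (φ : 𝓢(Fin n → ℝ, ℂ)) : 𝓢(Fin n → ℝ, ℂ) →L[ℂ] ℂ :=
    (PointwiseConvergenceCLM.evalCLM (RingHom.id ℂ) ℂ φ).comp
      ((ContinuousLinearMap.toPointwiseConvergenceCLM ℂ (RingHom.id ℂ) _ ℂ).comp T)
  let conj : ℂ →L⋆[ℂ] ℂ := (starL ℂ : ℂ ≃L⋆[ℂ] ℂ)
  have hdense := dense_span_range_schwartzTensor (ι := Fin n)
  have hright (g : Fin n → 𝓢(ℝ, ℂ)) : (B (schwartzTensor g)).comp (schwartzConj _) =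
      conj.comp (applyAt A (schwartzConj _ (schwartzTensor g))) :=
    ContinuousLinearMap.ext_on hdense (Set.forall_mem_range.2 fun f => h f g)
  have hleft (f : 𝓢(Fin n → ℝ, ℂ)) : applyAt B (schwartzConj _ f) =
      (conj.comp (A f)).comp (schwartzConj _) :=
    ContinuousLinearMap.ext_on hdense
      (Set.forall_mem_range.2 fun g => DFunLike.congr_fun (hright g) f)
  exact fun f g => DFunLike.congr_fun (hleft f) g

theorem extension_skewAdjoint_selfAdjoint_general (hE : IsExtension i k A ℓ E)
    (hE' : IsExtension i k B ℓ E') (hAB : IsAdjointDVO A B) : IsAdjointDVO E E' :=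
  isAdjointDVO_of_schwartzTensor (hE.adjoint_schwartzTensor hE' hAB)

end Adjoint

/-- The `k`-particle extension of a skew-adjoint operator is skew-adjoint, and the `k`-particle
extension of a self-adjoint operator is self-adjoint. -/
theorem extension_skewAdjoint_selfAdjoint (i k : ℕ) (hi : 0 < i) (hik : i ≤ k)
    (A : DVO i) (ℓ : Fin i → Fin k) (hℓ : Function.Injective ℓ)
    (E : DVO k) (hE : IsExtension i k A ℓ E) :
    (IsSkewAdjointDVO A → IsSkewAdjointDVO E) ∧
    (IsSelfAdjointDVO A → IsSelfAdjointDVO E) := by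
  simp only [isSkewAdjointDVO_iff, isSelfAdjointDVO_iff]
  exact ⟨extension_skewAdjoint_selfAdjoint_general hE hE.neg,
    extension_skewAdjoint_selfAdjoint_general hE hE⟩
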